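/- Let Σ and Σ̂ be d×d positive semidefinite symmetric matrices, and let P̂_⊥ be the orthogonal projection onto the complement of the d_r-dimensional leading eigensubspace of Σ̂. Then tr(P̂_⊥ Σ P̂_⊥) ≤ Σ_{i=d_r+1}^d λ_i(Σ̂) + √(d_r)·‖Σ̂ − Σ‖_F + tr(Σ − Σ̂). -/

import Mathlib

open Matrix

/-- Frobenius norm of a real matrix. -/
noncomputable def frob {d : ℕ} (A : Matrix (Fin d) (Fin d) ℝ) : ℝ :=
  Real.sqrt (∑ i, ∑ j, (A i j) ^ 2)

lemma frob_eq_sqrt_trace {d : ℕ} (A : Matrix (Fin d) (Fin d) ℝ) :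
    frob A = Real.sqrt (A * Aᵀ).trace := by
  simp [frob, Matrix.trace, Matrix.mul_apply, sq]

/-- Cauchy–Schwarz for the trace pairing. -/
lemma trace_mul_transpose_le_frob_mul_frob {d : ℕ} (A B : Matrix (Fin d) (Fin d) ℝ) :
    (A * Bᵀ).trace ≤ frob A * frob B := by
  have h := Real.sum_mul_le_sqrt_mul_sqrt (Finset.univ : Finset (Fin d × Fin d))
    (fun p => A p.1 p.2) (fun p => B p.1 p.2)
  simpa [frob, Matrix.trace, Matrix.mul_apply, Fintype.sum_prod_type] using h

/-- The Frobenius norm of an orthogonal projection of rank `r` is `√r`. -/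
lemma frob_mul_transpose_self {d r : ℕ} {V : Matrix (Fin d) (Fin r) ℝ} (hV : Vᵀ * V = 1) :
    frob (V * Vᵀ) = Real.sqrt r := by
  have h : V * Vᵀ * (V * Vᵀ)ᵀ = V * Vᵀ := by
    rw [Matrix.transpose_mul, Matrix.transpose_transpose, Matrix.mul_assoc,
      ← Matrix.mul_assoc Vᵀ V, hV, Matrix.one_mul]
  rw [frob_eq_sqrt_trace, h, Matrix.trace_mul_comm, hV, Matrix.trace_one, Fintype.card_fin]

/-- The trace of a compression to the complement of the column space of `V`. -/
lemma trace_compl_compression {d r : ℕ} {V : Matrix (Fin d) (Fin r) ℝ} (hV : Vᵀ * V = 1)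
    (S : Matrix (Fin d) (Fin d) ℝ) :
    ((1 - V * Vᵀ) * S * (1 - V * Vᵀ)).trace = S.trace - (S * (V * Vᵀ)).trace := by
  have h : (1 - V * Vᵀ) * (1 - V * Vᵀ) = 1 - V * Vᵀ := by
    have h' : V * Vᵀ * (V * Vᵀ) = V * Vᵀ := by
      rw [Matrix.mul_assoc, ← Matrix.mul_assoc Vᵀ V, hV, Matrix.one_mul]
    rw [Matrix.mul_sub, Matrix.sub_mul, Matrix.sub_mul, h']
    simp
  rw [Matrix.trace_mul_comm, ← Matrix.mul_assoc, h, Matrix.trace_mul_comm, Matrix.mul_sub,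
    Matrix.mul_one, Matrix.trace_sub]

/-- If the columns of `V` are orthonormal eigenvectors of `A`, the trace of `A` on their span
is the sum of the eigenvalues. -/
lemma trace_mul_mul_transpose_of_eigenvectors {d r : ℕ} {V : Matrix (Fin d) (Fin r) ℝ}
    (hV : Vᵀ * V = 1) (A : Matrix (Fin d) (Fin d) ℝ) (c : Fin r → ℝ)
    (h : ∀ j, A.mulVec (fun i => V i j) = c j • (fun i => V i j)) :
    (A * (V * Vᵀ)).trace = ∑ j, c j := by
  have hAV : A * V = V * Matrix.diagonal c := by
    ext i j
    have := congrFun (h j) i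
    rw [Matrix.mul_diagonal, mul_comm]
    simpa [Matrix.mulVec, dotProduct, Matrix.mul_apply] using this
  rw [← Matrix.mul_assoc, hAV, Matrix.trace_mul_comm, ← Matrix.mul_assoc, hV, Matrix.one_mul,
    Matrix.trace_diagonal]

lemma sum_castLE_add_sum_filter_le {d r : ℕ} (h : r ≤ d) (f : Fin d → ℝ) :
    ∑ j : Fin r, f (Fin.castLE h j) +
      ∑ i ∈ Finset.univ.filter (fun i : Fin d => r ≤ (i : ℕ)), f i = ∑ i, f i := by
  have himage : Finset.univ.filter (fun i : Fin d => ¬ r ≤ (i : ℕ)) =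
      Finset.univ.map (Fin.castLEEmb h) := by
    ext i
    simp only [Finset.mem_filter, Finset.mem_univ, true_and, Finset.mem_map, not_le]
    exact ⟨fun hi => ⟨⟨i, hi⟩, rfl⟩, by rintro ⟨j, rfl⟩; exact j.2⟩
  rw [← Finset.sum_filter_add_sum_filter_not Finset.univ (fun i : Fin d => r ≤ (i : ℕ)) f,
    himage, Finset.sum_map, add_comm]
  rfl

/-- With `P⊥ = 1 - V Vᵀ` the projection onto the complement of the
`dr`-dimensional leading eigensubspace of `Sh`, one has
`tr(P⊥ S P⊥) ≤ Σ_{i>dr} λ_i(Sh) + √dr ‖Sh − S‖_F + tr(S − Sh)`. -/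
theorem stmt_7 {d dr : ℕ} (hdr : dr ≤ d)
    (S Sh : Matrix (Fin d) (Fin d) ℝ)
    (hS : S.PosSemidef) (hSh : Sh.PosSemidef)
    (μS μSh : Fin d → ℝ) (haS : Antitone μS) (haSh : Antitone μSh)
    (eS : ∃ σ : Equiv.Perm (Fin d), μS = hS.1.eigenvalues ∘ σ)
    (eSh : ∃ σ : Equiv.Perm (Fin d), μSh = hSh.1.eigenvalues ∘ σ)
    (V : Matrix (Fin d) (Fin dr) ℝ)
    (hV : Vᵀ * V = 1)
    (hEig : ∀ j : Fin dr,
      Sh.mulVec (fun i => V i j) = μSh (Fin.castLE hdr j) • (fun i => V i j)) :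
    Matrix.trace ((1 - V * Vᵀ) * S * (1 - V * Vᵀ)) ≤
      (∑ i ∈ Finset.univ.filter (fun i : Fin d => dr ≤ (i : ℕ)), μSh i)
        + Real.sqrt dr * frob (Sh - S) + Matrix.trace (S - Sh) := by
  have htr : Sh.trace = ∑ i, μSh i := by
    obtain ⟨σ, rfl⟩ := eSh
    rw [hSh.1.trace_eq_sum_eigenvalues]
    exact (Equiv.sum_comp σ hSh.1.eigenvalues).symm
  have hlead := trace_mul_mul_transpose_of_eigenvectors hV Sh _ hEig
  have hsplit := sum_castLE_add_sum_filter_le hdr μSh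
  have hcs := trace_mul_transpose_le_frob_mul_frob (Sh - S) (V * Vᵀ)
  rw [frob_mul_transpose_self hV, Matrix.transpose_mul, Matrix.transpose_transpose,
    Matrix.sub_mul, Matrix.trace_sub] at hcs
  rw [trace_compl_compression hV, Matrix.trace_sub]
  linarith
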